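/- Let G be a countable discrete group, let A and B be finite subgroups of G, let m_A and m_B be the uniform probability measures on A and B respectively, and let d ≥ 2 be an integer. Set μ = m_A * m_B and μ̃ = ((d−1)/d)·m_A + (1/d)·m_B. Then the asymptotic entropies satisfy h(G, μ̃) = ((d−1)/d²) · h(G, μ). In particular, if h(G,μ) ≤ d·h(G,μ̃), then h(G,μ) = 0. -/

import Mathlib

open Filter Topology
open scoped Classical

/-- A probability measure on a countable discrete group `G`:
a nonnegative function summing to `1`. -/
def IsProbMeasure {G : Type*} (μ : G → ℝ) : Prop :=
  (∀ g, 0 ≤ μ g) ∧ HasSum μ 1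

/-- Convolution of two measures on a discrete group: `(μ*ν)(g) = ∑_h μ(h) ν(h⁻¹g)`. -/
noncomputable def conv {G : Type*} [Group G] (μ ν : G → ℝ) : G → ℝ :=
  fun g => ∑' h, μ h * ν (h⁻¹ * g)

/-- Convolution powers of a measure, with `μ^{*0} = δ_e`. -/
noncomputable def convPow {G : Type*} [Group G] (μ : G → ℝ) : ℕ → G → ℝ
  | 0 => fun g => if g = 1 then 1 else 0
  | n + 1 => conv (convPow μ n) μ

/-- The entropy `H(μ) = ∑_g −μ(g) log μ(g) ∈ [0,∞]` of a probability measure on a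
countable discrete group. -/
noncomputable def entropy {G : Type*} (μ : G → ℝ) : ENNReal :=
  ∑' g, ENNReal.ofReal (-(μ g * Real.log (μ g)))

/-- The uniform probability measure on a finite subgroup `A` of `G`. -/
noncomputable def uniformOnSubgroup {G : Type*} [Group G] (A : Subgroup G) : G → ℝ :=
  fun g => if g ∈ A then (Nat.card A : ℝ)⁻¹ else 0

/-!
The measures `m_A` and `m_B` are idempotent, so a random word in them collapses to a reduced
alternating word. Multiplying `(α m_A + β m_B)^{*n}` on the left by `m_A` changes its entropy by at
most `log |A|` and makes it a mixture of at most `2(n+1)` words `μ^{*j} * m_A` or `μ^{*(j+1)}`,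
where `μ = m_A * m_B`. The entropy of a mixture differs from the average entropy of its components
by at most the logarithm of their number, here `O(log n)`. Finally, each new letter increases the
average of `j`, corrected by `α` when the word ends in `m_B`, by exactly `α β`, so the entropy is
`α β h(G, μ) n + o(n)`.
-/

open Real (negMulLog)

section NegMulLog

variable {ι : Type*} {s : Finset ι} {p x : ι → ℝ}

theorem negMulLog_add_le {x y : ℝ} (hx : 0 ≤ x) (hy : 0 ≤ y) :
    negMulLog (x + y) ≤ negMulLog x + negMulLog y := by
  have mul_log_le {a b : ℝ} (ha : 0 ≤ a) (hb : 0 ≤ b) :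
      a * Real.log a ≤ a * Real.log (a + b) := by
    rcases ha.eq_or_lt with rfl | ha
    · simp
    · gcongr
      exact le_add_of_nonneg_right hb
  have hxy := mul_log_le hx hy
  have hyx := mul_log_le hy hx
  rw [add_comm y x] at hyx
  simp only [Real.negMulLog_eq_neg]
  linarith

theorem negMulLog_sum_le (hx : ∀ i ∈ s, 0 ≤ x i) :
    negMulLog (∑ i ∈ s, x i) ≤ ∑ i ∈ s, negMulLog (x i) :=
  Finset.le_sum_of_subadditive_on_pred negMulLog (0 ≤ ·) Real.negMulLog_zero.le
    (fun _ _ => negMulLog_add_le) (fun _ _ => add_nonneg) x hx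

theorem negMulLog_sum_mul_le (hp : ∀ i ∈ s, 0 ≤ p i) (hx : ∀ i ∈ s, 0 ≤ x i) :
    negMulLog (∑ i ∈ s, p i * x i) ≤ ∑ i ∈ s, (p i * negMulLog (x i) + negMulLog (p i) * x i) := by
  refine (negMulLog_sum_le fun i hi => mul_nonneg (hp i hi) (hx i hi)).trans_eq ?_
  exact Finset.sum_congr rfl fun i _ => by rw [Real.negMulLog_mul]; ring

theorem sum_negMulLog_le_log_card (hp : ∀ i ∈ s, 0 ≤ p i) (hp1 : ∑ i ∈ s, p i = 1) :
    ∑ i ∈ s, negMulLog (p i) ≤ Real.log s.card := by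
  have hs : s.Nonempty := Finset.nonempty_of_sum_ne_zero (hp1 ▸ one_ne_zero)
  have hcard : (0 : ℝ) < s.card := by exact_mod_cast hs.card_pos
  have jensen := Real.concaveOn_negMulLog.le_map_sum (w := fun _ => (s.card : ℝ)⁻¹)
    (fun _ _ => by positivity) (by simp [hcard.ne']) hp
  simp only [smul_eq_mul, ← Finset.mul_sum, hp1, mul_one] at jensen
  rw [Real.negMulLog, Real.log_inv, neg_mul_neg] at jensen
  exact le_of_mul_le_mul_left jensen (inv_pos.mpr hcard)

end NegMulLog

section Entropy

variable {X Y ι : Type*} {s : Finset ι} {p : ι → ℝ} {ν : ι → X → ℝ}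

theorem IsProbMeasure.negMulLog_nonneg {μ : X → ℝ} (hμ : IsProbMeasure μ) (x : X) :
    0 ≤ negMulLog (μ x) :=
  Real.negMulLog_nonneg (hμ.1 x) (le_hasSum hμ.2 x fun y _ => hμ.1 y)

theorem IsProbMeasure.tsum_ofReal {μ : X → ℝ} (hμ : IsProbMeasure μ) :
    ∑' x, ENNReal.ofReal (μ x) = 1 := by
  rw [← ENNReal.ofReal_tsum_of_nonneg hμ.1 hμ.2.summable, hμ.2.tsum_eq, ENNReal.ofReal_one]

theorem entropy_eq_tsum_negMulLog (μ : X → ℝ) :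
    entropy μ = ∑' x, ENNReal.ofReal (negMulLog (μ x)) := by
  rw [Real.negMulLog_eq_neg, entropy]

theorem entropy_comp_equiv (μ : Y → ℝ) (e : X ≃ Y) : entropy (μ ∘ e) = entropy μ :=
  e.tsum_eq fun y => ENNReal.ofReal (-(μ y * Real.log (μ y)))

theorem entropy_ne_top_of_finite_support {μ : X → ℝ} (hμ : μ.support.Finite) :
    entropy μ ≠ ⊤ := by
  rw [entropy, tsum_eq_sum (s := hμ.toFinset) fun x hx => by simp_all]
  exact ENNReal.sum_ne_top.mpr fun _ _ => ENNReal.ofReal_ne_top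

theorem sum_ofReal_mul_entropy_le (hp : ∀ i ∈ s, 0 ≤ p i) (hp1 : ∑ i ∈ s, p i = 1)
    (hν : ∀ i ∈ s, IsProbMeasure (ν i)) :
    ∑ i ∈ s, ENNReal.ofReal (p i) * entropy (ν i) ≤ entropy (∑ i ∈ s, p i • ν i) := by
  simp only [entropy_eq_tsum_negMulLog, ← ENNReal.tsum_mul_left]
  rw [← Summable.tsum_finsetSum fun _ _ => ENNReal.summable]
  refine ENNReal.tsum_le_tsum fun x => ?_
  calc ∑ i ∈ s, ENNReal.ofReal (p i) * ENNReal.ofReal (negMulLog (ν i x))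
      = ENNReal.ofReal (∑ i ∈ s, p i * negMulLog (ν i x)) := by
        rw [ENNReal.ofReal_sum_of_nonneg fun i hi =>
          mul_nonneg (hp i hi) ((hν i hi).negMulLog_nonneg x)]
        exact Finset.sum_congr rfl fun i hi => (ENNReal.ofReal_mul (hp i hi)).symm
    _ ≤ ENNReal.ofReal (negMulLog ((∑ i ∈ s, p i • ν i) x)) := by
        refine ENNReal.ofReal_le_ofReal ?_
        simpa using Real.concaveOn_negMulLog.le_map_sum hp hp1 fun i hi => (hν i hi).1 x

theorem entropy_sum_smul_le (hp : ∀ i ∈ s, 0 ≤ p i) (hp1 : ∑ i ∈ s, p i = 1)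
    (hν : ∀ i ∈ s, IsProbMeasure (ν i)) :
    entropy (∑ i ∈ s, p i • ν i) ≤
      ∑ i ∈ s, ENNReal.ofReal (p i) * entropy (ν i) + ENNReal.ofReal (Real.log s.card) := by
  have hp0 : ∀ i ∈ s, 0 ≤ negMulLog (p i) := fun i hi =>
    Real.negMulLog_nonneg (hp i hi) (hp1 ▸ Finset.single_le_sum hp hi)
  have pointwise (x : X) : ENNReal.ofReal (negMulLog ((∑ i ∈ s, p i • ν i) x)) ≤
      ∑ i ∈ s, (ENNReal.ofReal (p i) * ENNReal.ofReal (negMulLog (ν i x)) +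
        ENNReal.ofReal (negMulLog (p i)) * ENNReal.ofReal (ν i x)) := by
    have hle := negMulLog_sum_mul_le hp fun i hi => (hν i hi).1 x
    rw [Finset.sum_apply]
    refine (ENNReal.ofReal_le_ofReal hle).trans_eq ?_
    rw [ENNReal.ofReal_sum_of_nonneg fun i hi => add_nonneg
      (mul_nonneg (hp i hi) ((hν i hi).negMulLog_nonneg x)) (mul_nonneg (hp0 i hi) ((hν i hi).1 x))]
    refine Finset.sum_congr rfl fun i hi => ?_
    rw [ENNReal.ofReal_add (mul_nonneg (hp i hi) ((hν i hi).negMulLog_nonneg x))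
      (mul_nonneg (hp0 i hi) ((hν i hi).1 x)), ENNReal.ofReal_mul (hp i hi),
      ENNReal.ofReal_mul (hp0 i hi)]
  calc entropy (∑ i ∈ s, p i • ν i)
      ≤ ∑' x, ∑ i ∈ s, (ENNReal.ofReal (p i) * ENNReal.ofReal (negMulLog (ν i x)) +
        ENNReal.ofReal (negMulLog (p i)) * ENNReal.ofReal (ν i x)) := by
        rw [entropy_eq_tsum_negMulLog]
        exact ENNReal.tsum_le_tsum pointwise
    _ = ∑ i ∈ s, (ENNReal.ofReal (p i) * entropy (ν i) + ENNReal.ofReal (negMulLog (p i))) := by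
        rw [Summable.tsum_finsetSum fun _ _ => ENNReal.summable]
        refine Finset.sum_congr rfl fun i hi => ?_
        rw [ENNReal.tsum_add, ENNReal.tsum_mul_left, ENNReal.tsum_mul_left, (hν i hi).tsum_ofReal,
          mul_one, entropy_eq_tsum_negMulLog]
    _ ≤ _ := by
        rw [Finset.sum_add_distrib, ← ENNReal.ofReal_sum_of_nonneg hp0]
        gcongr
        exact sum_negMulLog_le_log_card hp hp1

theorem abs_toReal_entropy_sum_smul_sub_le (hp : ∀ i ∈ s, 0 ≤ p i) (hp1 : ∑ i ∈ s, p i = 1)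
    (hν : ∀ i ∈ s, IsProbMeasure (ν i)) (hfin : ∀ i ∈ s, entropy (ν i) ≠ ⊤) :
    |(entropy (∑ i ∈ s, p i • ν i)).toReal - ∑ i ∈ s, p i * (entropy (ν i)).toReal| ≤
      Real.log s.card := by
  have hlog : 0 ≤ Real.log s.card := Real.log_natCast_nonneg _
  have hsum0 : 0 ≤ ∑ i ∈ s, p i * (entropy (ν i)).toReal :=
    Finset.sum_nonneg fun i hi => mul_nonneg (hp i hi) ENNReal.toReal_nonneg
  have hsum : ∑ i ∈ s, ENNReal.ofReal (p i) * entropy (ν i) =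
      ENNReal.ofReal (∑ i ∈ s, p i * (entropy (ν i)).toReal) := by
    rw [ENNReal.ofReal_sum_of_nonneg fun i hi => mul_nonneg (hp i hi) ENNReal.toReal_nonneg]
    exact Finset.sum_congr rfl fun i hi => by
      rw [ENNReal.ofReal_mul (hp i hi), ENNReal.ofReal_toReal (hfin i hi)]
  have lower := sum_ofReal_mul_entropy_le hp hp1 hν
  have upper := entropy_sum_smul_le hp hp1 hν
  rw [hsum, ← ENNReal.ofReal_add hsum0 hlog] at upper
  rw [hsum, ENNReal.ofReal_le_iff_le_toReal (upper.trans_lt ENNReal.ofReal_lt_top).ne] at lower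
  have upper_real := ENNReal.toReal_le_of_le_ofReal (add_nonneg hsum0 hlog) upper
  rw [abs_le]
  constructor <;> linarith

end Entropy

section GroupAlgebra

open MonoidAlgebra (single)

theorem isProbMeasure_coeff_iff {M : Type*} [Monoid M] {x : MonoidAlgebra ℝ M} :
    IsProbMeasure x.coeff ↔ (∀ m, 0 ≤ x.coeff m) ∧ MonoidAlgebra.lift ℝ ℝ M 1 x = 1 := by
  have hsum : HasSum x.coeff (MonoidAlgebra.lift ℝ ℝ M 1 x) := by
    simpa [MonoidAlgebra.lift_apply, Finsupp.sum] using
      hasSum_sum_of_ne_finset_zero fun m => Finsupp.notMem_support_iff.mp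
  exact and_congr_right fun _ => ⟨hsum.unique, fun h => h ▸ hsum⟩

theorem isProbMeasure_coeff_single {M : Type*} [Monoid M] (m : M) :
    IsProbMeasure (single m (1 : ℝ)).coeff :=
  isProbMeasure_coeff_iff.mpr
    ⟨fun k => by rw [MonoidAlgebra.coeff_single, Finsupp.single_apply]; positivity, by simp⟩

/-- The finitely supported probability measures on `M`, encoded as elements of the monoid algebra
so that convolution becomes multiplication. -/
def probSubmonoid (M : Type*) [Monoid M] : Submonoid (MonoidAlgebra ℝ M) where
  carrier := {x | IsProbMeasure x.coeff}
  one_mem' := isProbMeasure_coeff_single 1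
  mul_mem' {x y} hx hy := by
    rw [Set.mem_ofPred_eq, isProbMeasure_coeff_iff] at hx hy ⊢
    refine ⟨fun m => ?_, by rw [map_mul, hx.2, hy.2, one_mul]⟩
    rw [MonoidAlgebra.coeff_mul]
    refine Finset.sum_nonneg fun i _ => Finset.sum_nonneg fun j _ => ?_
    have := mul_nonneg (hx.1 i) (hy.1 j)
    positivity

theorem mem_probSubmonoid {M : Type*} [Monoid M] {x : MonoidAlgebra ℝ M} :
    x ∈ probSubmonoid M ↔ IsProbMeasure x.coeff := Iff.rfl

theorem convex_probSubmonoid (M : Type*) [Monoid M] :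
    Convex ℝ (probSubmonoid M : Set (MonoidAlgebra ℝ M)) := by
  intro x hx y hy α β hα hβ hαβ
  rw [SetLike.mem_coe, mem_probSubmonoid, isProbMeasure_coeff_iff] at hx hy ⊢
  refine ⟨fun m => ?_, by simp [hx.2, hy.2, hαβ]⟩
  simpa using add_nonneg (mul_nonneg hα (hx.1 m)) (mul_nonneg hβ (hy.1 m))

/-- The entropy of a finitely supported measure; finiteness of the support makes it a genuine real
number, so nothing is lost in passing to `ENNReal.toReal`. -/
noncomputable def realEntropy {M : Type*} (x : MonoidAlgebra ℝ M) : ℝ :=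
  (entropy x.coeff).toReal

theorem abs_realEntropy_sum_smul_sub_le {M ι : Type*} [Monoid M] {s : Finset ι} {p : ι → ℝ}
    {x : ι → MonoidAlgebra ℝ M} (hp : ∀ i ∈ s, 0 ≤ p i) (hp1 : ∑ i ∈ s, p i = 1)
    (hx : ∀ i ∈ s, x i ∈ probSubmonoid M) :
    |realEntropy (∑ i ∈ s, p i • x i) - ∑ i ∈ s, p i * realEntropy (x i)| ≤
      Real.log s.card := by
  have hcoeff : ⇑(∑ i ∈ s, p i • x i).coeff = ∑ i ∈ s, p i • ⇑(x i).coeff := by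
    ext m
    simp
  rw [realEntropy, hcoeff]
  exact abs_toReal_entropy_sum_smul_sub_le hp hp1 hx fun i _ =>
    entropy_ne_top_of_finite_support (x i).coeff.hasFiniteSupport

theorem eq_sum_support_smul_single {M : Type*} (x : MonoidAlgebra ℝ M) :
    x = ∑ m ∈ x.coeff.support, x.coeff m • single m 1 := by
  simpa [Finsupp.sum] using (MonoidAlgebra.sum_coeff_single x).symm

theorem sum_support_coeff {M : Type*} [Monoid M] {x : MonoidAlgebra ℝ M}
    (hx : x ∈ probSubmonoid M) : ∑ m ∈ x.coeff.support, x.coeff m = 1 := by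
  simpa [MonoidAlgebra.lift_apply, Finsupp.sum] using (isProbMeasure_coeff_iff.mp hx).2

variable {G : Type*} [Group G] {x y : MonoidAlgebra ℝ G}

theorem realEntropy_single_mul (g : G) (x : MonoidAlgebra ℝ G) :
    realEntropy (single g 1 * x) = realEntropy x := by
  rw [realEntropy, realEntropy, ← entropy_comp_equiv x.coeff (Equiv.mulLeft g⁻¹)]
  congr 2
  ext h
  simp

theorem realEntropy_mul_single (x : MonoidAlgebra ℝ G) (g : G) :
    realEntropy (x * single g 1) = realEntropy x := by
  rw [realEntropy, realEntropy, ← entropy_comp_equiv x.coeff (Equiv.mulRight g⁻¹)]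
  congr 2
  ext h
  simp

theorem abs_realEntropy_mul_sub_left_le (hx : x ∈ probSubmonoid G) (hy : y ∈ probSubmonoid G) :
    |realEntropy (x * y) - realEntropy x| ≤ Real.log y.coeff.support.card := by
  have h := abs_realEntropy_sum_smul_sub_le (fun g _ => hy.1 g) (sum_support_coeff hy)
    fun g _ => mul_mem hx (isProbMeasure_coeff_single g)
  simpa only [realEntropy_mul_single, ← Finset.sum_mul, sum_support_coeff hy, one_mul,
    ← mul_smul_comm, ← Finset.mul_sum, ← eq_sum_support_smul_single] using h

theorem abs_realEntropy_mul_sub_right_le (hx : x ∈ probSubmonoid G) (hy : y ∈ probSubmonoid G) :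
    |realEntropy (x * y) - realEntropy y| ≤ Real.log x.coeff.support.card := by
  have h := abs_realEntropy_sum_smul_sub_le (fun g _ => hx.1 g) (sum_support_coeff hx)
    fun g _ => mul_mem (isProbMeasure_coeff_single g) hy
  simpa only [realEntropy_single_mul, ← Finset.sum_mul, sum_support_coeff hx, one_mul,
    ← smul_mul_assoc, ← eq_sum_support_smul_single] using h

theorem conv_coeff (x y : MonoidAlgebra ℝ G) : conv x.coeff y.coeff = (x * y).coeff := by
  ext g
  rw [MonoidAlgebra.coeff_mul_apply_left, conv, Finsupp.sum]
  exact tsum_eq_sum fun h hh => by simp [Finsupp.notMem_support_iff.mp hh]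

theorem convPow_coeff (x : MonoidAlgebra ℝ G) (n : ℕ) : convPow x.coeff n = (x ^ n).coeff := by
  induction n with
  | zero =>
    ext g
    simp [convPow, MonoidAlgebra.one_def, Finsupp.single_apply, eq_comm]
  | succ n ih => rw [convPow, ih, conv_coeff, pow_succ]

end GroupAlgebra

section UniformMeasure

open MonoidAlgebra (single)

variable {G : Type*} [Group G] (A : Subgroup G) [Fintype A]

/-- The uniform measure on a finite subgroup, as an element of the group algebra. -/
noncomputable def uniformElement : MonoidAlgebra ℝ G :=
  ∑ h : A, (Fintype.card A : ℝ)⁻¹ • single (h : G) 1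

theorem coeff_uniformElement : ⇑(uniformElement A).coeff = uniformOnSubgroup A := by
  ext g
  simp only [uniformElement, uniformOnSubgroup, Nat.card_eq_fintype_card]
  by_cases hg : g ∈ A
  · lift g to A using hg
    simp [Finsupp.single_apply]
  · have hne (h : A) : (h : G) ≠ g := fun hh => hg (hh ▸ h.2)
    simp [hg, hne]

theorem uniformElement_mem_probSubmonoid : uniformElement A ∈ probSubmonoid G :=
  (convex_probSubmonoid G).sum_mem (fun _ _ => by positivity) (by simp)
    fun h _ => isProbMeasure_coeff_single (h : G)

variable {A} in
theorem single_mul_uniformElement (h : A) :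
    single (h : G) 1 * uniformElement A = uniformElement A := by
  ext g
  simp [coeff_uniformElement, uniformOnSubgroup, A.mul_mem_cancel_left (A.inv_mem h.2)]

theorem isIdempotentElem_uniformElement : IsIdempotentElem (uniformElement A) := by
  rw [IsIdempotentElem]
  nth_rw 1 [uniformElement]
  simp only [Finset.sum_mul, smul_mul_assoc, single_mul_uniformElement, ← Finset.sum_smul]
  simp

end UniformMeasure

section AlternatingWords

/-- The reduced words starting with `a` in two idempotents `a` and `b`. The Boolean says whether the
last letter is `b`, the number `j` how many occurrences of `b` precede the last letter. -/
def alternatingWord {M : Type*} [Monoid M] (a b : M) : ℕ × Bool → M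
  | (j, false) => (a * b) ^ j * a
  | (j, true) => (a * b) ^ (j + 1)

/-- The index of the alternating word obtained by appending `a`. -/
def appendFst : ℕ × Bool → ℕ × Bool
  | (j, false) => (j, false)
  | (j, true) => (j + 1, false)

/-- The index of the alternating word obtained by appending `b`. -/
def appendSnd (i : ℕ × Bool) : ℕ × Bool :=
  (i.1, true)

theorem alternatingWord_mul_fst {M : Type*} [Monoid M] {a : M} (ha : IsIdempotentElem a) (b : M)
    (i : ℕ × Bool) : alternatingWord a b i * a = alternatingWord a b (appendFst i) := by
  rcases i with ⟨j, _ | _⟩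
  · simp only [alternatingWord, appendFst, mul_assoc, ha.eq]
  · rfl

theorem alternatingWord_mul_snd {M : Type*} [Monoid M] (a : M) {b : M} (hb : IsIdempotentElem b)
    (i : ℕ × Bool) : alternatingWord a b i * b = alternatingWord a b (appendSnd i) := by
  rcases i with ⟨j, _ | _⟩ <;> simp only [alternatingWord, appendSnd, pow_succ, mul_assoc, hb.eq]

variable {K : Type*} [CommSemiring K]

open Finsupp

/-- The distribution of the reduced form of `a w₁ ⋯ wₙ`, where the letters `wᵢ` are independent
and equal to `a` with weight `α` and to `b` with weight `β`. -/
noncomputable def reducedWordLaw (α β : K) : ℕ → (ℕ × Bool →₀ K)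
  | 0 => single (0, false) 1
  | n + 1 => α • (reducedWordLaw α β n).mapDomain appendFst +
      β • (reducedWordLaw α β n).mapDomain appendSnd

theorem linearCombination_reducedWordLaw_zero {V : Type*} [AddCommMonoid V] [Module K V]
    (f : ℕ × Bool → V) (α β : K) :
    linearCombination K f (reducedWordLaw α β 0) = f (0, false) := by
  simp [reducedWordLaw]

theorem linearCombination_reducedWordLaw_succ {V : Type*} [AddCommMonoid V] [Module K V]
    (f : ℕ × Bool → V) (α β : K) (n : ℕ) :
    linearCombination K f (reducedWordLaw α β (n + 1)) =
      linearCombination K (fun i => α • f (appendFst i) + β • f (appendSnd i))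
        (reducedWordLaw α β n) := by
  simp only [reducedWordLaw, map_add, map_smul, linearCombination_mapDomain]
  simp only [linearCombination_apply, Finsupp.sum, Function.comp_apply, smul_add,
    Finset.sum_add_distrib, Finset.smul_sum, smul_comm α, smul_comm β]

/-- A length of reduced words that grows by exactly `α * β` on average when a random letter is
appended; it differs by at most `1` from the number of factors `a * b`. -/
def compensatedLength (α : K) (i : ℕ × Bool) : K :=
  i.1 + if i.2 then α else 0

theorem average_compensatedLength_append {α β : K} (hαβ : α + β = 1) (i : ℕ × Bool) :
    α * compensatedLength α (appendFst i) + β * compensatedLength α (appendSnd i) =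
      compensatedLength α i + α * β := by
  have hj : α * i.1 + β * i.1 = i.1 := by rw [← add_mul, hαβ, one_mul]
  rcases i with ⟨j, _ | _⟩
  · calc α * (j + 0) + β * (j + α) = α * j + β * j + α * β := by ring
      _ = j + 0 + α * β := by rw [hj, add_zero]
  · calc α * ((j + 1 : ℕ) + 0) + β * (j + α) = α * j + β * j + α + α * β := by push_cast; ring
      _ = j + α + α * β := by rw [hj]

variable {α β : K}

theorem linearCombination_reducedWordLaw_one (hαβ : α + β = 1) (n : ℕ) :
    linearCombination K (fun _ => (1 : K)) (reducedWordLaw α β n) = 1 := by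
  induction n with
  | zero => rw [linearCombination_reducedWordLaw_zero]
  | succ n ih => simpa [linearCombination_reducedWordLaw_succ, hαβ] using ih

theorem linearCombination_reducedWordLaw_compensatedLength (hαβ : α + β = 1) (n : ℕ) :
    linearCombination K (compensatedLength α) (reducedWordLaw α β n) = n * (α * β) := by
  induction n with
  | zero => simp [linearCombination_reducedWordLaw_zero, compensatedLength]
  | succ n ih =>
    have hmass := linearCombination_reducedWordLaw_one hαβ n
    simp only [linearCombination_apply, Finsupp.sum, smul_eq_mul, mul_one] at ih hmass
    simp only [linearCombination_reducedWordLaw_succ, smul_eq_mul,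
      average_compensatedLength_append hαβ]
    simp only [linearCombination_apply, Finsupp.sum, smul_eq_mul, mul_add, Finset.sum_add_distrib,
      ih, ← Finset.sum_mul, hmass]
    push_cast
    ring

theorem linearCombination_reducedWordLaw_alternatingWord {R : Type*} [Semiring R] [Algebra K R]
    {a b : R} (ha : IsIdempotentElem a) (hb : IsIdempotentElem b) (α β : K) (n : ℕ) :
    linearCombination K (alternatingWord a b) (reducedWordLaw α β n) =
      a * (α • a + β • b) ^ n := by
  induction n with
  | zero => simp [linearCombination_reducedWordLaw_zero, alternatingWord]
  | succ n ih =>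
    rw [linearCombination_reducedWordLaw_succ, pow_succ, ← mul_assoc, ← ih]
    simp only [← alternatingWord_mul_fst ha, ← alternatingWord_mul_snd a hb, ← mul_smul_comm,
      ← mul_add, linearCombination_apply, Finsupp.sum, Finset.sum_mul, smul_mul_assoc]

theorem support_reducedWordLaw_subset (α β : K) (n : ℕ) :
    (reducedWordLaw α β n).support ⊆ Finset.range (n + 1) ×ˢ Finset.univ := by
  induction n with
  | zero => exact support_single_subset.trans (by simp)
  | succ n ih =>
    have image_subset (f : ℕ × Bool → ℕ × Bool) (hf : ∀ i, (f i).1 ≤ i.1 + 1) (c : K) :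
        (c • (reducedWordLaw α β n).mapDomain f).support ⊆
          Finset.range (n + 1 + 1) ×ˢ Finset.univ := fun i hi => by
      obtain ⟨k, hk, rfl⟩ := Finset.mem_image.mp (mapDomain_support (support_smul hi))
      have hk1 := Finset.mem_range.mp (Finset.mem_product.mp (ih hk)).1
      exact Finset.mk_mem_product (Finset.mem_range.mpr ((hf k).trans_lt (by lia)))
        (Finset.mem_univ _)
    refine support_add.trans (Finset.union_subset (image_subset _ ?_ _) (image_subset _ ?_ _))
    · rintro ⟨j, _ | _⟩ <;> simp [appendFst]
    · simp [appendSnd]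

theorem card_support_reducedWordLaw_le (α β : K) (n : ℕ) :
    (reducedWordLaw α β n).support.card ≤ 2 * (n + 1) := by
  simpa [mul_comm] using Finset.card_le_card (support_reducedWordLaw_subset α β n)

theorem reducedWordLaw_nonneg [PartialOrder K] [IsOrderedRing K] (hα : 0 ≤ α) (hβ : 0 ≤ β)
    (n : ℕ) : 0 ≤ reducedWordLaw α β n := by
  induction n with
  | zero => exact single_nonneg.mpr zero_le_one
  | succ n ih =>
    exact add_nonneg (smul_nonneg hα (mapDomain_nonneg ih)) (smul_nonneg hβ (mapDomain_nonneg ih))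

end AlternatingWords

section LinearGrowth

theorem tendsto_div_natCast_iff {u : ℕ → ℝ} {c : ℝ} :
    Tendsto (fun n : ℕ => u n / n) atTop (𝓝 c) ↔
      ∀ ε > 0, ∃ K, ∀ n : ℕ, |u n - c * n| ≤ ε * n + K := by
  have abs_sub_eq {n : ℕ} (hn : 0 < n) : |u n - c * n| = |u n / n - c| * n := by
    have hnpos : (0 : ℝ) < n := by exact_mod_cast hn
    rw [← abs_of_pos hnpos, ← abs_mul, abs_of_pos hnpos, sub_mul, div_mul_cancel₀ _ hnpos.ne']
  constructor
  · intro hu ε hε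
    have hle : ∀ᶠ n : ℕ in atTop, |u n - c * n| - ε * n ≤ 0 := by
      filter_upwards [Metric.tendsto_nhds.mp hu ε hε, eventually_gt_atTop 0] with n hn hn0
      rw [abs_sub_eq hn0, sub_nonpos]
      gcongr
      exact hn.le
    obtain ⟨K, hK⟩ := (isBoundedUnder_of_eventually_le hle).bddAbove_range
    exact ⟨K, fun n => by linarith [hK (Set.mem_range_self n)]⟩
  · intro hu
    refine Metric.tendsto_nhds.mpr fun ε hε => ?_
    obtain ⟨K, hK⟩ := hu (ε / 2) (half_pos hε)
    filter_upwards [tendsto_natCast_atTop_atTop.eventually_gt_atTop (K / (ε / 2)),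
      eventually_gt_atTop 0] with n hn hn0
    rw [div_lt_iff₀ (half_pos hε)] at hn
    have hnpos : (0 : ℝ) < n := by exact_mod_cast hn0
    rw [Real.dist_eq, ← mul_lt_mul_iff_left₀ hnpos, ← abs_sub_eq hn0]
    linarith [hK n]

theorem log_le_mul_sub_log {x ε : ℝ} (hx : 0 < x) (hε : 0 < ε) :
    Real.log x ≤ ε * x - Real.log ε := by
  have h := Real.log_le_sub_one_of_pos (mul_pos hε hx)
  rw [Real.log_mul hε.ne' hx.ne'] at h
  linarith

theorem abs_sum_mul_sub_mul_sum_le {ι : Type*} {s : Finset ι} {p f w : ι → ℝ} {L ε K : ℝ}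
    (hp : ∀ i ∈ s, 0 ≤ p i) (hp1 : ∑ i ∈ s, p i = 1)
    (hf : ∀ i ∈ s, |f i - L * w i| ≤ ε * w i + K) :
    |∑ i ∈ s, p i * f i - L * ∑ i ∈ s, p i * w i| ≤ ε * ∑ i ∈ s, p i * w i + K := by
  calc |∑ i ∈ s, p i * f i - L * ∑ i ∈ s, p i * w i|
      = |∑ i ∈ s, p i * (f i - L * w i)| := by
        simp only [mul_sub, Finset.sum_sub_distrib, Finset.mul_sum, mul_left_comm L]
    _ ≤ ∑ i ∈ s, |p i * (f i - L * w i)| := Finset.abs_sum_le_sum_abs _ _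
    _ ≤ ∑ i ∈ s, p i * (ε * w i + K) := Finset.sum_le_sum fun i hi => by
        rw [abs_mul, abs_of_nonneg (hp i hi)]
        exact mul_le_mul_of_nonneg_left (hf i hi) (hp i hi)
    _ = ε * ∑ i ∈ s, p i * w i + K := by
        simp only [mul_add, Finset.sum_add_distrib, ← Finset.sum_mul, hp1, one_mul, Finset.mul_sum,
          mul_left_comm ε]

end LinearGrowth

section IdempotentMeasures

variable {G : Type*} [Group G] {a b : MonoidAlgebra ℝ G} {α β L : ℝ}

theorem alternatingWord_mem {M : Type*} [Monoid M] {S : Submonoid M} {a b : M} (ha : a ∈ S)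
    (hb : b ∈ S) (i : ℕ × Bool) : alternatingWord a b i ∈ S := by
  rcases i with ⟨j, _ | _⟩
  · exact mul_mem (pow_mem (mul_mem ha hb) j) ha
  · exact pow_mem (mul_mem ha hb) (j + 1)

theorem exists_abs_realEntropy_alternatingWord_sub_le (ha : a ∈ probSubmonoid G)
    (hb : b ∈ probSubmonoid G) (hα : 0 ≤ α) (hα1 : α ≤ 1)
    (hL : Tendsto (fun n : ℕ => realEntropy ((a * b) ^ n) / n) atTop (𝓝 L)) {ε : ℝ} (hε : 0 < ε) :
    ∃ K, ∀ i, |realEntropy (alternatingWord a b i) - L * compensatedLength α i| ≤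
      ε * compensatedLength α i + K := by
  obtain ⟨K, hK⟩ := tendsto_div_natCast_iff.mp hL ε hε
  have hlog : 0 ≤ Real.log a.coeff.support.card := Real.log_natCast_nonneg _
  refine ⟨K + Real.log a.coeff.support.card + |L| + ε, ?_⟩
  rintro ⟨j, _ | _⟩
  · have hmul := abs_realEntropy_mul_sub_left_le (pow_mem (mul_mem ha hb) j) ha
    have htri := abs_sub_le (realEntropy ((a * b) ^ j * a)) (realEntropy ((a * b) ^ j)) (L * j)
    simp only [alternatingWord, compensatedLength, Bool.false_eq_true, if_false, add_zero]
    linarith [hK j, abs_nonneg L]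
  · have hshift : |L * (j + 1) - L * (j + α)| ≤ |L| := by
      rw [← mul_sub, abs_mul, add_sub_add_left_eq_sub, abs_of_nonneg (sub_nonneg.mpr hα1)]
      exact mul_le_of_le_one_right (abs_nonneg L) (by linarith)
    have htri := abs_sub_le (realEntropy ((a * b) ^ (j + 1))) (L * (j + 1)) (L * (j + α))
    have hKj := hK (j + 1)
    have := mul_nonneg hε.le hα
    push_cast at hKj
    simp only [alternatingWord, compensatedLength, if_true]
    linarith

theorem abs_realEntropy_mul_pow_sub_le (ha : a ∈ probSubmonoid G) (hb : b ∈ probSubmonoid G)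
    (ha2 : IsIdempotentElem a) (hb2 : IsIdempotentElem b) (hα : 0 ≤ α) (hβ : 0 ≤ β)
    (hαβ : α + β = 1) {ε K : ℝ}
    (hK : ∀ i, |realEntropy (alternatingWord a b i) - L * compensatedLength α i| ≤
      ε * compensatedLength α i + K) (n : ℕ) :
    |realEntropy (a * (α • a + β • b) ^ n) - L * (n * (α * β))| ≤
      ε * (n * (α * β)) + K + Real.log (2 * (n + 1)) := by
  set p := reducedWordLaw α β n
  have hp : ∀ i ∈ p.support, 0 ≤ p i := fun i _ => reducedWordLaw_nonneg hα hβ n i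
  have hp1 : ∑ i ∈ p.support, p i = 1 := by
    simpa [Finsupp.linearCombination_apply, Finsupp.sum] using
      linearCombination_reducedWordLaw_one hαβ n
  have hmean : ∑ i ∈ p.support, p i * compensatedLength α i = n * (α * β) :=
    linearCombination_reducedWordLaw_compensatedLength hαβ n
  have hword : ∑ i ∈ p.support, p i • alternatingWord a b i = a * (α • a + β • b) ^ n :=
    linearCombination_reducedWordLaw_alternatingWord ha2 hb2 α β n
  have hmix := abs_realEntropy_sum_smul_sub_le hp hp1 fun i _ => alternatingWord_mem ha hb i
  have havg := abs_sum_mul_sub_mul_sum_le hp hp1 fun i _ => hK i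
  rw [hword] at hmix
  rw [hmean] at havg
  have hcard : Real.log p.support.card ≤ Real.log (2 * (n + 1)) := by
    have hpos : 0 < p.support.card :=
      (Finset.nonempty_of_sum_ne_zero (hp1 ▸ one_ne_zero)).card_pos
    gcongr
    exact_mod_cast card_support_reducedWordLaw_le α β n
  have htri := abs_sub_le (realEntropy (a * (α • a + β • b) ^ n))
    (∑ i ∈ p.support, p i * realEntropy (alternatingWord a b i)) (L * (n * (α * β)))
  linarith

theorem tendsto_realEntropy_add_smul_pow_div (ha : a ∈ probSubmonoid G) (hb : b ∈ probSubmonoid G)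
    (ha2 : IsIdempotentElem a) (hb2 : IsIdempotentElem b) (hα : 0 ≤ α) (hβ : 0 ≤ β)
    (hαβ : α + β = 1)
    (hL : Tendsto (fun n : ℕ => realEntropy ((a * b) ^ n) / n) atTop (𝓝 L)) :
    Tendsto (fun n : ℕ => realEntropy ((α • a + β • b) ^ n) / n) atTop (𝓝 (α * β * L)) := by
  refine tendsto_div_natCast_iff.mpr fun ε hε => ?_
  obtain ⟨K, hK⟩ := exists_abs_realEntropy_alternatingWord_sub_le ha hb hα (by linarith) hL
    (half_pos hε)
  set C := Real.log a.coeff.support.card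
  refine ⟨C + K + ε / 2 - Real.log (ε / 4), fun n => ?_⟩
  have hν : (α • a + β • b) ^ n ∈ probSubmonoid G :=
    pow_mem (convex_probSubmonoid G ha hb hα hβ hαβ) n
  have hleft := abs_realEntropy_mul_sub_right_le ha hν
  have hwords := abs_realEntropy_mul_pow_sub_le ha hb ha2 hb2 hα hβ hαβ hK n
  have hlog : Real.log (2 * (n + 1)) ≤ ε / 4 * (2 * (n + 1)) - Real.log (ε / 4) :=
    log_le_mul_sub_log (by positivity) (by positivity)
  have hmean : ε / 2 * (n * (α * β)) ≤ ε / 2 * n := by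
    gcongr
    exact mul_le_of_le_one_right n.cast_nonneg (mul_le_one₀ (by linarith) hβ (by linarith))
  have htri := abs_sub_le (realEntropy ((α • a + β • b) ^ n))
    (realEntropy (a * (α • a + β • b) ^ n)) (L * (n * (α * β)))
  rw [abs_sub_comm] at hleft
  rw [show α * β * L * n = L * (n * (α * β)) by ring]
  linarith

end IdempotentMeasures

theorem asymptotic_entropy_mother_group_measures_general {G : Type*} [Group G] (A B : Subgroup G)
    [Finite A] [Finite B] {α β L : ℝ} (hα : 0 ≤ α) (hβ : 0 ≤ β) (hαβ : α + β = 1)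
    (hL : Tendsto
      (fun n : ℕ =>
        (entropy (convPow (conv (uniformOnSubgroup A) (uniformOnSubgroup B)) n)).toReal / n)
      atTop (𝓝 L)) :
    Tendsto
      (fun n : ℕ =>
        (entropy (convPow
          (fun g : G => α * uniformOnSubgroup A g + β * uniformOnSubgroup B g) n)).toReal / n)
      atTop (𝓝 (α * β * L)) ∧
    (0 < β → L ≤ β⁻¹ * (α * β * L) → L = 0) := by
  cases nonempty_fintype A
  cases nonempty_fintype B
  have hL0 : 0 ≤ L := ge_of_tendsto' hL fun n => by positivity
  refine ⟨?_, fun hβ0 h => hL0.antisymm' ?_⟩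
  · have hconv : conv (uniformOnSubgroup A) (uniformOnSubgroup B) =
        (uniformElement A * uniformElement B).coeff := by
      rw [← conv_coeff, coeff_uniformElement, coeff_uniformElement]
    have hmix : (fun g : G => α * uniformOnSubgroup A g + β * uniformOnSubgroup B g) =
        (α • uniformElement A + β • uniformElement B).coeff := by
      ext g
      simp [← coeff_uniformElement]
    simp only [hconv, hmix, convPow_coeff] at hL ⊢
    exact tendsto_realEntropy_add_smul_pow_div (uniformElement_mem_probSubmonoid A)
      (uniformElement_mem_probSubmonoid B) (isIdempotentElem_uniformElement A)
      (isIdempotentElem_uniformElement B) hα hβ hαβ hL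
  · have hcancel : β⁻¹ * (α * β * L) = α * L := by field_simp
    exact nonpos_of_mul_nonpos_right (by linear_combination h + hcancel + L * hαβ) hβ0

/-- The entropy computation for the Mother group: with `μ = m_A * m_B` and
`μ̃ = ((d−1)/d) m_A + (1/d) m_B`, one has `h(G,μ̃) = ((d−1)/d²)·h(G,μ)`; in particular,
if `h(G,μ) ≤ d·h(G,μ̃)` then `h(G,μ) = 0`. -/
theorem asymptotic_entropy_mother_group_measures
    {G : Type*} [Group G] [Countable G] (A B : Subgroup G)
    (hA : (A : Set G).Finite) (hB : (B : Set G).Finite)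
    (d : ℕ) (hd : 2 ≤ d) (L : ℝ)
    (hL : Tendsto
      (fun n : ℕ =>
        (entropy (convPow (conv (uniformOnSubgroup A) (uniformOnSubgroup B)) n)).toReal / n)
      atTop (𝓝 L)) :
    Tendsto
      (fun n : ℕ =>
        (entropy (convPow
          (fun g : G => ((d - 1 : ℝ) / d) * uniformOnSubgroup A g
            + (1 / (d : ℝ)) * uniformOnSubgroup B g) n)).toReal / n)
      atTop (𝓝 (((d - 1 : ℝ) / (d : ℝ) ^ 2) * L)) ∧
    (L ≤ (d : ℝ) * (((d - 1 : ℝ) / (d : ℝ) ^ 2) * L) → L = 0) := by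
  have hd1 : (1 : ℝ) ≤ d := by exact_mod_cast one_le_two.trans hd
  have := hA.to_subtype
  have := hB.to_subtype
  have hcoeff : (d - 1 : ℝ) / d ^ 2 = (d - 1) / d * (1 / d) := by field_simp
  obtain ⟨hlim, hzero⟩ := asymptotic_entropy_mother_group_measures_general A B
    (α := (d - 1 : ℝ) / d) (β := 1 / (d : ℝ)) (div_nonneg (by linarith) (by positivity))
    (by positivity) (by field_simp; ring) hL
  rw [hcoeff]
  exact ⟨hlim, by simpa using hzero (by positivity)⟩
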